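/- Let K be a complete non-archimedean normed field whose norm is nontrivial (there exists y ∈ K with 0 < ‖y‖ < 1), and let a : (Fin n →₀ ℕ) → K tend to 0 along the cofinite filter. Let R^n = {x ∈ K^n : ‖x_j‖ ≤ 1 for all j} be the closed unit polydisc, and define F : R^n → K by F(x) = ∑'_i a(i)·x^i, where x^i = ∏_j x_j^{i(j)}. If there exist c ∈ R^n and r > 0 such that F(x) = 0 for every x ∈ R^n with ‖x − c‖ < r, then a(i) = 0 for all multi-indices i. -/

import Mathlib

/-- A power series in one variable over a nontrivially normed field whose sum vanishes near `0`
has zero coefficients. -/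
theorem coeff_eq_zero_of_eventually_hasSum_zero {K : Type*} [NontriviallyNormedField K]
    {b : ℕ → K} (h : ∀ᶠ z in nhds (0 : K), HasSum (fun k => b k * z ^ k) 0) (k : ℕ) :
    b k = 0 := by
  have hp : HasFPowerSeriesAt (0 : K → K) (FormalMultilinearSeries.ofScalars K b) 0 := by
    rw [hasFPowerSeriesAt_iff]
    filter_upwards [h] with z hz
    simpa [FormalMultilinearSeries.coeff_ofScalars, mul_comm] using hz
  have := congrArg (fun p => FormalMultilinearSeries.coeff p k) hp.eq_zero
  rw [FormalMultilinearSeries.coeff_ofScalars] at this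
  exact this

section Ultrametric

variable {K : Type*} [NormedField K] [CompleteSpace K] [IsUltrametricDist K]

/-- A family of products of a null family with a family of elements of the unit ball is summable. -/
theorem summable_mul_of_tendsto_cofinite_zero {ι : Type*} {a u : ι → K}
    (ha : Filter.Tendsto a Filter.cofinite (nhds 0)) (hu : ∀ i, ‖u i‖ ≤ 1) :
    Summable fun i => a i * u i := by
  refine NonarchimedeanAddGroup.summable_of_tendsto_cofinite_zero ?_
  refine squeeze_zero_norm (fun i => ?_) (tendsto_zero_iff_norm_tendsto_zero.1 ha)
  rw [norm_mul]
  exact mul_le_of_le_one_right (norm_nonneg _) (hu i)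

/-- A strictly convergent power series in one variable can be re-expanded around any point of the
unit disc, with the new expansion valid on the whole unit disc. -/
theorem exists_translate_strictly_convergent {b : ℕ → K}
    (hb : Filter.Tendsto b Filter.cofinite (nhds 0)) {c : K} (hc : ‖c‖ ≤ 1) :
    ∃ d : ℕ → K, ∀ h : K, ‖h‖ ≤ 1 →
      HasSum (fun m => d m * h ^ m) (∑' k, b k * (c + h) ^ k) := by
  have hfin : Filter.Tendsto (fun p : ℕ × ℕ => b (p.1 + p.2)) Filter.cofinite (nhds 0) := by
    refine hb.comp (Filter.Tendsto.cofinite_of_finite_preimage_singleton fun k => ?_)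
    refine (Finset.HasAntidiagonal.antidiagonal k).finite_toSet.subset fun p hp => ?_
    simpa using hp
  refine ⟨fun m => ∑' p, b (m + p) * (((m + p).choose m : K) * c ^ p), fun h hh => ?_⟩
  have hs : Summable fun p : ℕ × ℕ =>
      b (p.1 + p.2) * (((p.1 + p.2).choose p.1 : K) * c ^ p.2 * h ^ p.1) := by
    refine summable_mul_of_tendsto_cofinite_zero hfin fun p => ?_
    rw [norm_mul, norm_mul, norm_pow, norm_pow]
    exact mul_le_one₀ (mul_le_one₀ (IsUltrametricDist.norm_natCast_le_one K _) (by positivity)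
      (pow_le_one₀ (norm_nonneg _) hc)) (by positivity) (pow_le_one₀ (norm_nonneg _) hh)
  have hprod := hs.hasSum.prod_fiberwise fun m => (hs.prod_factor m).hasSum
  have hsig : ∑' p : ℕ × ℕ, b (p.1 + p.2) * (((p.1 + p.2).choose p.1 : K) * c ^ p.2 * h ^ p.1)
      = ∑' k, b k * (c + h) ^ k := by
    rw [← Finset.HasAntidiagonal.sigmaAntidiagonalEquivProd.tsum_eq]
    have hs' := Finset.HasAntidiagonal.sigmaAntidiagonalEquivProd.summable_iff.2 hs
    refine (Summable.tsum_sigma' (fun k => (hasSum_fintype _).summable) hs').trans ?_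
    refine tsum_congr fun k => ?_
    rw [tsum_fintype, add_comm c h, (Commute.all h c).add_pow', Finset.mul_sum,
      ← Finset.sum_coe_sort (Finset.HasAntidiagonal.antidiagonal k)]
    refine Finset.sum_congr rfl fun p _ => ?_
    have hp : p.1.1 + p.1.2 = k := Finset.HasAntidiagonal.mem_antidiagonal.1 p.2
    simp only [Function.comp_apply, Finset.HasAntidiagonal.sigmaAntidiagonalEquivProd_apply, hp,
      nsmul_eq_mul]
    ring
  rw [← hsig]
  convert! hprod using 2 with m
  rw [← tsum_mul_right]
  exact tsum_congr fun p => by ring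

end Ultrametric

/-- A strictly convergent power series in one variable that vanishes near a point of the unit disc
has zero coefficients. -/
theorem strictly_convergent_eq_zero_of_locally_zero_one_variable {K : Type*}
    [NontriviallyNormedField K] [CompleteSpace K] [IsUltrametricDist K] {b : ℕ → K}
    (hb : Filter.Tendsto b Filter.cofinite (nhds 0)) {c : K} (hc : ‖c‖ ≤ 1) {r : ℝ} (hr : 0 < r)
    (hzero : ∀ x : K, ‖x‖ ≤ 1 → ‖x - c‖ < r → ∑' k, b k * x ^ k = 0) (k : ℕ) : b k = 0 := by
  obtain ⟨d, hd⟩ := exists_translate_strictly_convergent hb hc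
  have hd0 : ∀ m, d m = 0 := by
    refine coeff_eq_zero_of_eventually_hasSum_zero ?_
    filter_upwards [Metric.ball_mem_nhds (0 : K) (lt_min hr one_pos)] with h hh
    rw [mem_ball_zero_iff, lt_min_iff] at hh
    have hx : ‖c + h‖ ≤ 1 :=
      (IsUltrametricDist.norm_add_le_max c h).trans (max_le hc hh.2.le)
    simpa [hzero (c + h) hx (by simpa using hh.1)] using hd h hh.2.le
  refine coeff_eq_zero_of_eventually_hasSum_zero ?_ k
  filter_upwards [Metric.ball_mem_nhds (0 : K) one_pos] with x hx
  rw [mem_ball_zero_iff] at hx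
  have hxc : ‖x - c‖ ≤ 1 :=
    sub_eq_add_neg x c ▸ (IsUltrametricDist.norm_add_le_max x (-c)).trans
      (max_le hx.le ((norm_neg c).trans_le hc))
  have hsum : ∑' k, b k * x ^ k = 0 := by
    simpa [hd0] using (hd (x - c) hxc).tsum_eq.symm
  have hs : Summable fun k => b k * x ^ k :=
    summable_mul_of_tendsto_cofinite_zero hb fun k => by
      rw [norm_pow]; exact pow_le_one₀ (norm_nonneg _) hx.le
  exact hsum ▸ hs.hasSum

/-- Splitting the first exponent off a multi-index in `n + 1` variables. -/
noncomputable def Finsupp.consEquivProd (n : ℕ) : ℕ × (Fin n →₀ ℕ) ≃ (Fin (n + 1) →₀ ℕ) where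
  toFun p := Finsupp.cons p.1 p.2
  invFun i := (i 0, Finsupp.tail i)
  left_inv p := by simp
  right_inv i := by simp

/-- A strictly convergent power series in `n` variables that vanishes near a point of the unit
polydisc has zero coefficients. -/
theorem strictly_convergent_eq_zero_of_locally_zero_of_nontriviallyNormed {K : Type*}
    [NontriviallyNormedField K] [CompleteSpace K] [IsUltrametricDist K] {r : ℝ} (hr : 0 < r)
    {n : ℕ} (a : (Fin n →₀ ℕ) → K) (ha : Filter.Tendsto a Filter.cofinite (nhds 0))
    (c : Fin n → K) (hc : ∀ j, ‖c j‖ ≤ 1)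
    (hzero : ∀ x : Fin n → K, (∀ j, ‖x j‖ ≤ 1) → ‖x - c‖ < r →
      (∑' i : Fin n →₀ ℕ, a i * ∏ j, x j ^ i j) = 0) :
    ∀ i, a i = 0 := by
  induction n with
  | zero =>
    intro i
    have := hzero c hc (by rwa [sub_self, norm_zero])
    rw [tsum_eq_single i fun j hj => (hj (Subsingleton.elim j i)).elim] at this
    simpa using this
  | succ n ih =>
    have ha' : Filter.Tendsto (fun p => a (Finsupp.consEquivProd n p)) Filter.cofinite (nhds 0) :=
      ha.comp (Finsupp.consEquivProd n).injective.tendsto_cofinite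
    have key : ∀ k (i : Fin n →₀ ℕ), a (Finsupp.cons k i) = 0 := by
      intro k
      have hcons : Function.Injective fun i : Fin n →₀ ℕ => Finsupp.cons k i :=
        Function.LeftInverse.injective (g := Finsupp.tail) (Finsupp.tail_cons k)
      refine ih (fun i => a (Finsupp.cons k i)) (ha.comp hcons.tendsto_cofinite) (fun j => c j.succ)
        (fun j => hc j.succ) fun y hy hyc => ?_
      have hmon : ∀ i : Fin n →₀ ℕ, ‖∏ j, y j ^ i j‖ ≤ 1 := fun i => by
        rw [norm_prod]
        refine Finset.prod_le_one (fun j _ => norm_nonneg _) fun j _ => ?_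
        rw [norm_pow]
        exact pow_le_one₀ (norm_nonneg _) (hy j)
      have hb : Summable fun k => ∑' i : Fin n →₀ ℕ,
          a (Finsupp.consEquivProd n (k, i)) * ∏ j, y j ^ i j :=
        (summable_mul_of_tendsto_cofinite_zero (u := fun p : ℕ × (Fin n →₀ ℕ) => ∏ j, y j ^ p.2 j)
          ha' fun p => hmon p.2).prod
      refine strictly_convergent_eq_zero_of_locally_zero_one_variable
        (b := fun k => ∑' i : Fin n →₀ ℕ, a (Finsupp.consEquivProd n (k, i)) * ∏ j, y j ^ i j)
        hb.tendsto_cofinite_zero (hc 0) hr (fun x hx hxc => ?_) k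
      have hz := hzero (Fin.cons x y) (Fin.cases (by simpa using hx) (by simpa using hy)) ?_
      · rw [← (Finsupp.consEquivProd n).tsum_eq] at hz
        have hs : Summable fun p : ℕ × (Fin n →₀ ℕ) =>
            a (Finsupp.consEquivProd n p) * (x ^ p.1 * ∏ j, y j ^ p.2 j) :=
          summable_mul_of_tendsto_cofinite_zero ha' fun p => by
            rw [norm_mul, norm_pow]
            exact mul_le_one₀ (pow_le_one₀ (norm_nonneg _) hx) (norm_nonneg _) (hmon p.2)
        rw [← hz]
        have he : ∀ p : ℕ × (Fin n →₀ ℕ), ∏ j, (Fin.cons x y : Fin (n + 1) → K) j ^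
            (Finsupp.consEquivProd n p) j = x ^ p.1 * ∏ j, y j ^ p.2 j := fun p => by
          simp [Finsupp.consEquivProd, Fin.prod_univ_succ]
        simp only [he]
        rw [hs.tsum_prod]
        refine tsum_congr fun m => ?_
        rw [← tsum_mul_right]
        exact tsum_congr fun i => by ring
      · rw [pi_norm_lt_iff hr] at hyc ⊢
        exact Fin.cases (by simpa using hxc) (by simpa using hyc)
    intro i
    rw [← Finsupp.cons_tail i]
    exact key _ _

/-- Let `K` be a complete non-archimedean normed field with nontrivial norm and `a` the
coefficient family of a strictly convergent power series in `n` variables.  If the function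
`F(x) = ∑' i, a i · x^i` vanishes on some open ball (intersected with the closed unit
polydisc `R^n`) around a point `c` of `R^n`, then all coefficients `a i` vanish. -/
theorem strictly_convergent_eq_zero_of_locally_zero {K : Type*} [NormedField K]
    [CompleteSpace K]
    (hna : ∀ u v : K, ‖u + v‖ ≤ max ‖u‖ ‖v‖)
    (hnontriv : ∃ y : K, 0 < ‖y‖ ∧ ‖y‖ < 1)
    {n : ℕ} (a : (Fin n →₀ ℕ) → K)
    (ha : Filter.Tendsto a Filter.cofinite (nhds 0))
    (c : Fin n → K) (hc : ∀ j, ‖c j‖ ≤ 1) (r : ℝ) (hr : 0 < r)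
    (hzero : ∀ x : Fin n → K, (∀ j, ‖x j‖ ≤ 1) → ‖x - c‖ < r →
      (∑' i : Fin n →₀ ℕ, a i * ∏ j, x j ^ i j) = 0) :
    ∀ i, a i = 0 := by
  have : IsUltrametricDist K :=
    IsUltrametricDist.isUltrametricDist_of_forall_norm_add_le_max_norm hna
  obtain ⟨y, hy0, hy1⟩ := hnontriv
  let _ : NontriviallyNormedField K :=
    { (inferInstance : NormedField K) with
      non_trivial := ⟨y⁻¹, by rw [norm_inv]; exact (one_lt_inv₀ hy0).2 hy1⟩ }
  exact strictly_convergent_eq_zero_of_locally_zero_of_nontriviallyNormed hr a ha c hc hzero
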